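/- arXiv:2104.12877 — 2 statements merged into one kernel-verified Lean document; each statement's English description precedes it below -/
import Mathlib

section
/- Let k be an infinite field, let d ≥ 1, and let f_0, ..., f_N ∈ k[X] be polynomials of degree at most d. Then there exist polynomials A_0, ..., A_N ∈ k[X], each of degree at most d − 1, such that 1 = f_0·A_0 + ⋯ + f_N·A_N, if and only if f_0, ..., f_N have no nontrivial common factor (i.e. they are not all zero and no polynomial of positive degree divides every f_i). -/
/-!
If `1 = ∑ i, f i * A i`, a common factor divides `1`, hence is constant. Conversely, `k[X]` is a
principal ideal domain, so the absence of a common factor gives a Bézout relation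
`1 = ∑ i, B i * f i`. Let `f j` be of maximal degree `m`, and replace each `B i`, `i ≠ j`, by its
remainder `r i` modulo `f j`. Then `f j` divides `1 - ∑ i ≠ j, f i * r i`, whose degree is at most
`m + (m - 1)`, so the quotient, which serves as the `j`-th coefficient, has degree at most `m - 1`.
This argument works over every field.
-/

open Polynomial

/-- Bézout: polynomials that are not all zero and have no common factor of positive degree
generate the unit ideal. -/
lemma exists_sum_mul_eq_one {k : Type*} [Field k] {n : ℕ} (f : Fin n → k[X])
    (h0 : ∃ i, f i ≠ 0) (hg : ∀ g : k[X], 0 < g.degree → ¬ (∀ i, g ∣ f i)) :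
    ∃ B : Fin n → k[X], ∑ i, B i * f i = 1 := by
  rw [← Ideal.mem_span_range_iff_exists_fun]
  set I := Ideal.span (Set.range f)
  set g := Submodule.IsPrincipal.generator I
  have hI : Ideal.span {g} = I := Ideal.span_singleton_generator I
  have hdvd : ∀ i, g ∣ f i := fun i => by
    rw [← Ideal.mem_span_singleton, hI]
    exact Ideal.subset_span ⟨i, rfl⟩
  have hg0 : g ≠ 0 := by
    rintro h
    obtain ⟨i, hi⟩ := h0
    exact hi (zero_dvd_iff.mp (h ▸ hdvd i))
  have hdeg : g.degree ≤ 0 := not_lt.mp fun h => hg g h hdvd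
  have hunit : IsUnit g :=
    isUnit_iff_degree_eq_zero.mpr (le_antisymm hdeg (zero_le_degree_iff.mpr hg0))
  rw [← hI, Ideal.mem_span_singleton]
  exact hunit.dvd

lemma natDegree_mod_le_pred {k : Type*} [Field k] (p : k[X]) {q : k[X]} (hq : q ≠ 0) :
    (p % q).natDegree ≤ q.natDegree - 1 := by
  by_cases h : q.natDegree = 0
  · have hu : IsUnit q := isUnit_iff_degree_eq_zero.mpr (by rw [degree_eq_natDegree hq, h]; rfl)
    rw [EuclideanDomain.mod_eq_zero.mpr hu.dvd]
    simp
  · have := natDegree_mod_lt p h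
    omega

/-- Over an infinite field `k`, polynomials `f 0, …, f N` of degree at most `d ≥ 1`
admit a representation `1 = ∑ i, f i * A i` with `deg (A i) ≤ d - 1` if and only if
they have no nontrivial common factor (i.e. they are not all zero and no polynomial
of positive degree divides every `f i`). -/
theorem stmt1 {k : Type*} [Field k] [Infinite k] (d N : ℕ) (hd : 1 ≤ d)
    (f : Fin (N + 1) → k[X]) (hdeg : ∀ i, (f i).degree ≤ (d : ℕ)) :
    (∃ A : Fin (N + 1) → k[X],
        (∀ i, (A i).degree ≤ ((d - 1 : ℕ) : ℕ)) ∧ (1 : k[X]) = ∑ i, f i * A i) ↔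
      ((∃ i, f i ≠ 0) ∧ ∀ g : k[X], 0 < g.degree → ¬ (∀ i, g ∣ f i)) := by
  constructor
  · rintro ⟨A, -, hA⟩
    refine ⟨?_, fun g hg hdvd => ?_⟩
    · by_contra! h
      simp [h] at hA
    · have h1 : g ∣ 1 := hA ▸ Finset.dvd_sum fun i _ => (hdvd i).mul_right _
      rw [isUnit_iff_degree_eq_zero.mp (isUnit_of_dvd_one h1)] at hg
      exact lt_irrefl _ hg
  · rintro ⟨h0, hg⟩
    obtain ⟨B, hB⟩ := exists_sum_mul_eq_one f h0 hg
    obtain ⟨j, -, hj⟩ := Finset.exists_max_image Finset.univ (fun i => (f i).degree)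
      Finset.univ_nonempty
    replace hj : ∀ i, (f i).degree ≤ (f j).degree := fun i => hj i (Finset.mem_univ i)
    have hj0 : f j ≠ 0 := by
      intro h
      obtain ⟨i, hi⟩ := h0
      have := hj i
      rw [h, degree_zero, le_bot_iff, degree_eq_bot] at this
      exact hi this
    have hm : (f j).natDegree ≤ d := natDegree_le_of_degree_le (hdeg j)
    have hdvd : f j ∣ 1 - ∑ i ∈ Finset.univ.erase j, f i * (B i % f j) := by
      have h : 1 - ∑ i ∈ Finset.univ.erase j, f i * (B i % f j) =
          B j * f j + ∑ i ∈ Finset.univ.erase j, f i * (f j * (B i / f j)) := by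
        rw [sub_eq_iff_eq_add, add_assoc, ← Finset.sum_add_distrib, ← hB,
          ← Finset.add_sum_erase _ _ (Finset.mem_univ j)]
        congr 1
        refine Finset.sum_congr rfl fun i _ => ?_
        rw [← mul_add, EuclideanDomain.div_add_mod, mul_comm]
      rw [h]
      exact dvd_add (dvd_mul_left _ _)
        (Finset.dvd_sum fun i _ => (dvd_mul_right _ _).mul_left _)
    obtain ⟨C, hC⟩ := hdvd
    -- The constant `1` obeys this bound because natural subtraction truncates when `m = 0`.
    have hbound : (f j * C).natDegree ≤ (f j).natDegree + ((f j).natDegree - 1) := by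
      rw [← hC]
      refine (natDegree_sub_le _ _).trans (max_le (by simp)
        (natDegree_sum_le_of_forall_le _ _ fun i _ => ?_))
      exact natDegree_mul_le_of_le (natDegree_le_natDegree (hj i))
        (natDegree_mod_le_pred _ hj0)
    have hCdeg : C.natDegree ≤ d - 1 := by
      by_cases hC0 : C = 0
      · simp [hC0]
      · rw [natDegree_mul hj0 hC0] at hbound
        omega
    refine ⟨fun i => if i = j then C else B i % f j, fun i => ?_, ?_⟩
    · apply degree_le_of_natDegree_le
      dsimp only
      split_ifs
      · exact hCdeg
      · exact (natDegree_mod_le_pred _ hj0).trans (by omega)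
    · rw [← Finset.add_sum_erase _ _ (Finset.mem_univ j)]
      beta_reduce
      rw [if_pos rfl, ← hC, sub_add_eq_add_sub, eq_sub_iff_add_eq]
      congr 1
      exact Finset.sum_congr rfl fun i hi => by rw [if_neg (Finset.ne_of_mem_erase hi)]
end

section
/- For every real number x ≥ 0, every integer d ≥ 2, and every integer k ≥ 0, one has Σ_{j=0}^{k} log(1 + d^j·x)/d^j ≤ d·log d/(d−1)^2 + d·(log 2 + log⁺ x)/(d−1). -/
/-!
Since `1` and `dʲ x` are both at most `dʲ max(1, x)`, each logarithm is bounded by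
`log 2 + j log d + log⁺ x`. Dividing by `dʲ` and summing over all `j ≥ 0` gives a convergent
series of nonnegative terms that dominates the partial sum; it is evaluated by
`hasSum_coe_mul_geometric_of_norm_lt_one` and `hasSum_geometric_of_lt_one`.
-/

/-- For every real `x ≥ 0`, every integer `d ≥ 2` and every integer `k ≥ 0`,
`∑_{j=0}^{k} log(1 + dʲ·x)/dʲ ≤ d·log d/(d-1)² + d·(log 2 + log⁺ x)/(d-1)`,
where `log⁺ x = log (max 1 x)`. -/
theorem stmt2 (x : ℝ) (hx : 0 ≤ x) (d : ℕ) (hd : 2 ≤ d) (k : ℕ) :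
    ∑ j ∈ Finset.range (k + 1), Real.log (1 + (d : ℝ) ^ j * x) / (d : ℝ) ^ j ≤
      (d : ℝ) * Real.log d / ((d : ℝ) - 1) ^ 2 +
        (d : ℝ) * (Real.log 2 + Real.log (max 1 x)) / ((d : ℝ) - 1) := by
  have hd2 : (2 : ℝ) ≤ d := by exact_mod_cast hd
  have hd0 : (0 : ℝ) < d := by linarith
  have hd1 : (d : ℝ) - 1 ≠ 0 := by linarith
  have hm : 1 ≤ max 1 x := le_max_left _ _
  have hlogd : 0 ≤ Real.log d := Real.log_nonneg (by linarith)
  have hlogm : 0 ≤ Real.log 2 + Real.log (max 1 x) :=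
    add_nonneg (Real.log_nonneg (by norm_num)) (Real.log_nonneg hm)
  have hr0 : (0 : ℝ) ≤ (d : ℝ)⁻¹ := by positivity
  have hr1 : (d : ℝ)⁻¹ < 1 := inv_lt_one_of_one_lt₀ (by linarith)
  -- The right-hand side is the full series of the termwise bounds, since
  -- `∑ j r ^ j = r / (1 - r) ^ 2` and `∑ r ^ j = (1 - r)⁻¹` at `r = 1 / d`.
  have hs : HasSum (fun j : ℕ => Real.log d * (j * (d : ℝ)⁻¹ ^ j) +
      (Real.log 2 + Real.log (max 1 x)) * (d : ℝ)⁻¹ ^ j)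
      ((d : ℝ) * Real.log d / ((d : ℝ) - 1) ^ 2 +
        (d : ℝ) * (Real.log 2 + Real.log (max 1 x)) / ((d : ℝ) - 1)) := by
    have hn : ‖(d : ℝ)⁻¹‖ < 1 := by rwa [Real.norm_of_nonneg hr0]
    have h1 := (hasSum_coe_mul_geometric_of_norm_lt_one hn).mul_left (Real.log d)
    have h2 := (hasSum_geometric_of_lt_one hr0 hr1).mul_left
      (Real.log 2 + Real.log (max 1 x))
    have hr : 1 - (d : ℝ)⁻¹ = ((d : ℝ) - 1) / d := by field_simp
    have h := h1.add h2
    rw [hr] at h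
    have he : Real.log d * ((d : ℝ)⁻¹ / (((d : ℝ) - 1) / d) ^ 2) +
        (Real.log 2 + Real.log (max 1 x)) * (((d : ℝ) - 1) / d)⁻¹ =
        (d : ℝ) * Real.log d / ((d : ℝ) - 1) ^ 2 +
          (d : ℝ) * (Real.log 2 + Real.log (max 1 x)) / ((d : ℝ) - 1) := by
      field_simp
    rw [he] at h
    exact h
  refine le_trans (Finset.sum_le_sum fun j _ => ?_)
    (sum_le_hasSum (Finset.range (k + 1)) (fun j _ => by positivity) hs)
  have hp : 1 ≤ (d : ℝ) ^ j := one_le_pow₀ (by linarith)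
  have hp0 : 0 < (d : ℝ) ^ j := by positivity
  -- Both `1` and `d ^ j * x` are at most `d ^ j * max 1 x`.
  have hle : 1 + (d : ℝ) ^ j * x ≤ 2 * ((d : ℝ) ^ j * max 1 x) := by
    have h1 := mul_le_mul_of_nonneg_left (le_max_right 1 x) hp0.le
    have h2 := one_le_mul_of_one_le_of_one_le hp hm
    linarith
  have hlog := Real.log_le_log (by positivity) hle
  rw [Real.log_mul (by norm_num) (by positivity), Real.log_mul hp0.ne' (by positivity),
    Real.log_pow] at hlog
  rw [inv_pow, div_eq_mul_inv]
  have := mul_le_mul_of_nonneg_right hlog (inv_nonneg.2 hp0.le)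
  linarith
end
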